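/- Let M be a geometric C-minimal structure, φ(u,v) an L-formula in two variables with parameters c̄ from M, and b ∈ M generic over c̄. Let D be a cone containing b and suppose that for every u ∈ D there is a subcone V_u of D containing u such that φ(u,v) holds in M for all v ∈ V_u. Then there exists a cone D' containing b such that φ(u,v) holds in M for all u,v ∈ D'. -/

import Mathlib

open FirstOrder Set

universe u

namespace CMinPaper

variable {M : Type u}

/-- The axioms of a (dense) C-relation. -/
def IsCRelation (C : M → M → M → Prop) : Prop :=
  (∀ x y z, C x y z → C x z y) ∧
  (∀ x y z, C x y z → ¬ C y x z) ∧
  (∀ x y z w, C x y z → C x w z ∨ C w y z) ∧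
  (∀ x y, x ≠ y → ∃ z, z ≠ y ∧ C x y z)

/-- A cone (open ball). -/
def IsCone (C : M → M → M → Prop) (s : Set M) : Prop :=
  ∃ a b : M, a ≠ b ∧ s = {x | C a x b}

/-- A 0-level set (closed ball). -/
def IsClosedBall (C : M → M → M → Prop) (s : Set M) : Prop :=
  ∃ a b : M, s = {x | ¬ C x a b}

/-- A ball is a cone or a closed ball. -/
def IsBall (C : M → M → M → Prop) (s : Set M) : Prop :=
  IsCone C s ∨ IsClosedBall C s

/-- The node `a ∧ b` of the underlying tree, viewed as the closed ball
`{z | ¬ C z a b}` of `M` it determines. -/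
def node (C : M → M → M → Prop) (a b : M) : Set M := {x | ¬ C x a b}

/-- `Δ(x,y,z)`. -/
def Delta (C : M → M → M → Prop) (x y z : M) : Prop := ¬ C x y z ∧ ¬ C y x z

/-- The (unary) sets which are definable by a quantifier-free formula with
parameters using only `C` and equality.  A term is either the variable
(`Option.none`) or a parameter (`Option.some a`). -/
inductive QFDef (C : M → M → M → Prop) : Set M → Prop
  | atomC (t₁ t₂ t₃ : Option M) :
      QFDef C {x | C (t₁.getD x) (t₂.getD x) (t₃.getD x)}
  | atomEq (t₁ t₂ : Option M) : QFDef C {x | t₁.getD x = t₂.getD x}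
  | compl {s : Set M} : QFDef C s → QFDef C sᶜ
  | union {s t : Set M} : QFDef C s → QFDef C t → QFDef C (s ∪ t)

/-- The ternary relation interpreting the symbol `r`. -/
def interpC (L : FirstOrder.Language.{u, u}) (M : Type u) [L.Structure M]
    (r : L.Relations 3) : M → M → M → Prop :=
  fun a b c => Language.Structure.RelMap r ![a, b, c]

/-- `M` is C-minimal: in every elementarily equivalent structure, every
definable (with parameters) subset is quantifier-free definable using only
`C` and `=`. -/
def CMinimal (L : FirstOrder.Language.{u, u}) (M : Type u) [L.Structure M]
    (r : L.Relations 3) : Prop :=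
  ∀ (N : Type u) (SN : L.Structure N),
    letI := SN
    L.ElementarilyEquivalent M N →
      ∀ s : Set N, Set.Definable₁ (univ : Set N) L s → QFDef (interpC L N r) s

/-- The (model-theoretic) algebraic closure of a set of parameters. -/
def acl (L : FirstOrder.Language.{u, u}) (M : Type u) [L.Structure M] (A : Set M) : Set M :=
  {a | ∃ s : Set M, Set.Definable₁ A L s ∧ s.Finite ∧ a ∈ s}

/-- The Steinitz exchange property for the algebraic closure. -/
def HasExchange (L : FirstOrder.Language.{u, u}) (M : Type u) [L.Structure M] : Prop :=
  ∀ (A : Set M) (a b : M),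
    a ∈ acl L M (A ∪ {b}) → a ∉ acl L M A → b ∈ acl L M (A ∪ {a})

/-- `M` is geometric: acl has the exchange property in every elementarily
equivalent structure. -/
def Geometric (L : FirstOrder.Language.{u, u}) (M : Type u) [L.Structure M] : Prop :=
  ∀ (N : Type u) (SN : L.Structure N),
    letI := SN
    L.ElementarilyEquivalent M N → HasExchange L N

/-- `M` is trivial: in every elementarily equivalent structure the pregeometry
given by acl is trivial. -/
def TrivialGeometry (L : FirstOrder.Language.{u, u}) (M : Type u) [L.Structure M] : Prop :=
  ∀ (N : Type u) (SN : L.Structure N),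
    letI := SN
    L.ElementarilyEquivalent M N →
      ∀ A : Set N, acl L N A = ⋃ a ∈ A, acl L N {a}

/-- `M` is definably maximal: every definable family of cones which is linearly
ordered by inclusion has a non-empty intersection. -/
def DefinablyMaximal (L : FirstOrder.Language.{u, u}) (M : Type u) [L.Structure M]
    (r : L.Relations 3) : Prop :=
  ∀ (n : ℕ) (S : Set (Fin (n + 1) → M)) (P : Set (Fin n → M)),
    Set.Definable (univ : Set M) L S →
    (∀ p ∈ P, IsCone (interpC L M r) {x | Fin.snoc p x ∈ S}) →
    (∀ p ∈ P, ∀ q ∈ P,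
      {x | Fin.snoc p x ∈ S} ⊆ {x | Fin.snoc q x ∈ S} ∨
        {x | Fin.snoc q x ∈ S} ⊆ {x | Fin.snoc p x ∈ S}) →
    P.Nonempty → (⋂ p ∈ P, {x | Fin.snoc p x ∈ S}).Nonempty

/-- Leaves of the underlying tree are the singletons. -/
def IsLeafSet (s : Set M) : Prop := ∃ x : M, s = {x}

/-- The interval `(lo, hi)` of the branch `br c`, consisting of all nodes
(coded as the closed balls they determine) strictly between the endpoints.
`lo = none` denotes `-∞`; `lo = some p` denotes the node `c ∧ p`; `hi : M`
denotes the node `c ∧ hi` (the leaf `c` when `hi = c`).  The tree ordering is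
reverse inclusion of balls. -/
def branchInterval (C : M → M → M → Prop) (c : M) (lo : Option M) (hi : M) :
    Set (Set M) :=
  {B | (∃ s, B = node C c s) ∧ ¬ IsLeafSet B ∧
    (∀ p ∈ lo, B ⊂ node C c p) ∧ node C c hi ⊂ B}

/-- `I` is an interval of the branch `br c`. -/
def IsIntervalOn (C : M → M → M → Prop) (c : M) (I : Set (Set M)) : Prop :=
  ∃ (lo : Option M) (hi : M), I = branchInterval C c lo hi

/-- `I` is a bounded interval of `br c` (bounded from below and from above). -/
def IsBoundedInterval (C : M → M → M → Prop) (c : M) (I : Set (Set M)) : Prop :=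
  ∃ p hi : M, I = branchInterval C c (some p) hi ∧ ¬ IsLeafSet (node C c hi)

/-- `I` is an unbounded (i.e. not bounded) interval of `br c`. -/
def IsUnboundedInterval (C : M → M → M → Prop) (c : M) (I : Set (Set M)) :
    Prop :=
  IsIntervalOn C c I ∧ ¬ IsBoundedInterval C c I

/-- The relation on nodes coded by `S ⊆ M²` via `(s,t) ↦ (c ∧ s, d ∧ t)`. -/
def codedRel (C : M → M → M → Prop) (S : Set (Fin 2 → M)) (c d : M)
    (B B' : Set M) : Prop :=
  ∃ s t : M, ![s, t] ∈ S ∧ B = node C c s ∧ B' = node C d t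

/-- `S ⊆ M²` codes a bijection between the set `I` of nodes of `br c` and the
set `J` of nodes of `br d`. -/
def CodesBijectionBetween (C : M → M → M → Prop) (S : Set (Fin 2 → M))
    (c d : M) (I J : Set (Set M)) : Prop :=
  (∀ B B', codedRel C S c d B B' → B ∈ I ∧ B' ∈ J) ∧
  (∀ B ∈ I, ∃! B', B' ∈ J ∧ codedRel C S c d B B') ∧
  (∀ B' ∈ J, ∃! B, B ∈ I ∧ codedRel C S c d B B')

/-- Condition (NB): there is no definable bijection between a bounded interval
and an unbounded interval of branches of the underlying tree. -/
def NB (L : FirstOrder.Language.{u, u}) (M : Type u) [L.Structure M] (r : L.Relations 3) :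
    Prop :=
  ∀ (c d : M) (S : Set (Fin 2 → M)), Set.Definable (univ : Set M) L S →
    ∀ I J : Set (Set M),
      IsBoundedInterval (interpC L M r) c I →
      IsUnboundedInterval (interpC L M r) d J →
      ¬ CodesBijectionBetween (interpC L M r) S c d I J

/-- An infinite group definable in `M`: an infinite definable `G ⊆ Mⁿ`
together with a definable subset of `M^{3n}` which is the graph of a group
operation on `G`. -/
def DefinableInfiniteGroup (L : FirstOrder.Language.{u, u}) (M : Type u)
    [L.Structure M] : Prop :=
  ∃ (n : ℕ) (G : Set (Fin n → M)) (mul : (Fin n → M) → (Fin n → M) → Fin n → M)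
    (one : Fin n → M) (inv : (Fin n → M) → Fin n → M),
    Set.Definable (univ : Set M) L G ∧ G.Infinite ∧
    Set.Definable (univ : Set M) L
      {t : (Fin n ⊕ (Fin n ⊕ Fin n)) → M |
        t ∘ Sum.inl ∈ G ∧ t ∘ Sum.inr ∘ Sum.inl ∈ G ∧
          mul (t ∘ Sum.inl) (t ∘ Sum.inr ∘ Sum.inl) = t ∘ Sum.inr ∘ Sum.inr} ∧
    one ∈ G ∧ (∀ a ∈ G, ∀ b ∈ G, mul a b ∈ G) ∧
    (∀ a ∈ G, ∀ b ∈ G, ∀ c ∈ G, mul (mul a b) c = mul a (mul b c)) ∧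
    (∀ a ∈ G, mul one a = a ∧ mul a one = a) ∧
    (∀ a ∈ G, inv a ∈ G ∧ mul a (inv a) = one ∧ mul (inv a) a = one)

/-- `g` is a C-isomorphism from `A` onto `B`. -/
def CIsoOn (C : M → M → M → Prop) (A B : Set M) (g : M → M) : Prop :=
  Set.BijOn g A B ∧ ∀ x ∈ A, ∀ y ∈ A, ∀ z ∈ A, (C x y z ↔ C (g x) (g y) (g z))

/-- The relation `C_e(f,g,h)`. -/
def CeRel (C : M → M → M → Prop) (V : Set M) (e : M) (f g h : M → M) : Prop :=
  ∃ W : Set M, IsCone C W ∧ e ∈ W ∧ W ⊆ V ∧ ∀ x ∈ W \ {e}, C (f x) (g x) (h x)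

/-- The relation `(¬C)_e(f,g,h)`. -/
def NCeRel (C : M → M → M → Prop) (V : Set M) (e : M) (f g h : M → M) : Prop :=
  ∃ W : Set M, IsCone C W ∧ e ∈ W ∧ W ⊆ V ∧ ∀ x ∈ W \ {e}, ¬ C (f x) (g x) (h x)

/-- A function is definable on `V` if its graph over `V` is definable. -/
def DefinableFunOn (L : FirstOrder.Language.{u, u}) (M : Type u) [L.Structure M]
    (V : Set M) (g : M → M) : Prop :=
  Set.Definable (univ : Set M) L {t : Fin 2 → M | t 0 ∈ V ∧ g (t 0) = t 1}

/-- A nice family of functions `{f u : u ∈ U}` on the cone `V`, with absorbing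
element `e`. -/
structure NiceFamily (L : FirstOrder.Language.{u, u}) (M : Type u) [L.Structure M]
    (C : M → M → M → Prop) where
  U : Set M
  V : Set M
  e : M
  f : M → M → M
  coneU : IsCone C U
  coneV : IsCone C V
  he : e ∈ V
  definable : Set.Definable (univ : Set M) L
    {t : Fin 3 → M | t 0 ∈ U ∧ t 1 ∈ V ∧ f (t 0) (t 1) = t 2}
  auto : ∀ u ∈ U, CIsoOn C V V (f u)
  fixe : ∀ u ∈ U, f u e = e
  star : ∀ x ∈ V \ {e}, ∃ V' : Set M, V' ⊆ V ∧ IsCone C V' ∧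
    CIsoOn C U V' fun u => f u x

namespace NiceFamily

variable {L : FirstOrder.Language.{u, u}} [L.Structure M] {C : M → M → M → Prop}

/-- `f u` is tangent to `g` relatively to the family. -/
def Tangent (F : NiceFamily L M C) (u : M) (g : M → M) : Prop :=
  u ∈ F.U ∧ ∀ u' ∈ F.U, NCeRel C F.V F.e (F.f u) (F.f u') g

/-- The set `T_g` of indices of tangents to `g`. -/
def Tset (F : NiceFamily L M C) (g : M → M) : Set M := {u | F.Tangent u g}

/-- The set `Γ_{g,u}`. -/
def Gamma (F : NiceFamily L M C) (g : M → M) (u : M) : Set M :=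
  {y | y ∈ F.U ∧ CeRel C F.V F.e (F.f u) (F.f y) g}

/-- `g` is derivable relatively to the family: it has exactly one tangent. -/
def Derivable (F : NiceFamily L M C) (g : M → M) : Prop := ∃! u, F.Tangent u g

/-- `f u` is non-dilating. -/
def NonDilating (F : NiceFamily L M C) (u : M) : Prop :=
  NCeRel C F.V F.e (fun x => F.f u (F.f u x)) (F.f u) id

/-- `u₀` is an identity element for the family. -/
def HasIdentity (F : NiceFamily L M C) (u₀ : M) : Prop :=
  u₀ ∈ F.U ∧ ∀ x ∈ F.V, F.f u₀ x = x

end NiceFamily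

/-- Continuity on `A` with respect to the topology generated by the cones. -/
def ContinuousOnCones (C : M → M → M → Prop) (A : Set M) (g : M → M) : Prop :=
  ∀ x ∈ A, ∀ W : Set M, IsCone C W → g x ∈ W →
    ∃ W' : Set M, IsCone C W' ∧ x ∈ W' ∧ ∀ y ∈ W' ∩ A, g y ∈ W

/-!
Let `V` be a cone around `b` on which `φ(b, ·)` holds. As `V` is infinite, its extension to some
ultrapower of `M` has a point `y` which is not algebraic over `A ∪ {b}`. By exchange, `b` is not
algebraic over `A ∪ {y}`. The closed ball around the node `b ∧ y` is contained in the extension of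
`V`, so `b` belongs to the set of those `u` for which `φ(u, ·)` holds throughout the closed ball
`u ∧ y`. This set is definable over `A ∪ {y}`; by C-minimality its frontier is finite, so `b`, being
nonalgebraic, is an interior point. As `u` ranges over the cone around `b` which excludes `y`, all
the balls `u ∧ y` contain this cone, which turns the pointwise condition into a uniform one. By
Łoś's theorem the resulting cone in the ultrapower gives one in `M`.
-/

open Filter TopologicalSpace
open scoped Topology

/-- The cone around `b` cut out by `a`. The case `a = b` is allowed and gives the empty set. -/
def cone (C : M → M → M → Prop) (a b : M) : Set M := {x | C a x b}

namespace IsCRelation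

variable {C : M → M → M → Prop} {a b s t u v x y : M}

theorem left_notMem_cone (hC : IsCRelation C) : a ∉ cone C a b :=
  fun h => hC.2.1 _ _ _ h h

theorem exists_mem_cone_ne (hC : IsCRelation C) (hab : a ≠ b) : ∃ x ∈ cone C a b, x ≠ b :=
  have ⟨x, hxb, hx⟩ := hC.2.2.2 a b hab
  ⟨x, hC.1 _ _ _ hx, hxb⟩

theorem self_mem_cone (hC : IsCRelation C) (hab : a ≠ b) : b ∈ cone C a b := by
  obtain ⟨x, hx, -⟩ := hC.exists_mem_cone_ne hab
  obtain ⟨swap, asymm, branch, -⟩ := hC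
  simp only [cone, mem_ofPred_eq] at *
  grind

theorem cone_eq_cone_of_mem (hC : IsCRelation C) (hu : u ∈ cone C a b) :
    cone C a u = cone C a b := by
  obtain ⟨swap, asymm, branch, -⟩ := hC
  ext x
  simp only [cone, mem_ofPred_eq] at *
  grind

theorem exists_eq_cone (hC : IsCRelation C) {V : Set M} (hV : IsCone C V) (hu : u ∈ V) :
    ∃ s ≠ u, V = cone C s u := by
  obtain ⟨a, b, -, rfl⟩ := hV
  exact ⟨a, ne_of_mem_of_not_mem hu hC.left_notMem_cone |>.symm, (hC.cone_eq_cone_of_mem hu).symm⟩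

theorem cone_subset_or_superset (hC : IsCRelation C) (s t u : M) :
    cone C s u ⊆ cone C t u ∨ cone C t u ⊆ cone C s u := by
  obtain ⟨-, asymm, branch, -⟩ := hC
  simp only [cone, subset_def, mem_ofPred_eq]
  grind

theorem exists_cone_subset_inter (hC : IsCRelation C) (hs : s ≠ u) (ht : t ≠ u) :
    ∃ p ≠ u, cone C p u ⊆ cone C s u ∩ cone C t u := by
  rcases hC.cone_subset_or_superset s t u with h | h
  · exact ⟨s, hs, subset_inter Subset.rfl h⟩
  · exact ⟨t, ht, subset_inter h Subset.rfl⟩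

theorem node_subset_cone (hC : IsCRelation C) (hu : u ∈ cone C a b) (hv : v ∈ cone C a b) :
    node C u v ⊆ cone C a b := by
  obtain ⟨swap, asymm, branch, -⟩ := hC
  intro x hx
  simp only [cone, node, mem_ofPred_eq] at *
  grind

theorem cone_subset_node (hC : IsCRelation C) (hu : u ∈ cone C y b) :
    cone C y b ⊆ node C u y := by
  obtain ⟨swap, asymm, branch, -⟩ := hC
  intro x hx
  simp only [cone, node, mem_ofPred_eq] at *
  grind

theorem getD_congr (hC : IsCRelation C) {t₁ t₂ t₃ : Option M} (h₁ : ∀ a ∈ t₁, x ∈ cone C a u)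
    (h₂ : ∀ a ∈ t₂, x ∈ cone C a u) (h₃ : ∀ a ∈ t₃, x ∈ cone C a u) :
    C (t₁.getD x) (t₂.getD x) (t₃.getD x) ↔ C (t₁.getD u) (t₂.getD u) (t₃.getD u) := by
  obtain ⟨swap, asymm, branch, -⟩ := hC
  rcases t₁ with _ | a₁ <;> rcases t₂ with _ | a₂ <;> rcases t₃ with _ | a₃ <;>
    simp only [Option.getD, Option.mem_def, reduceCtorEq, Option.some.injEq, forall_eq',
      cone, mem_ofPred_eq] at * <;> grind

theorem getD_eq_congr (hC : IsCRelation C) {t₁ t₂ : Option M} (h₁ : ∀ a ∈ t₁, x ∈ cone C a u)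
    (h₂ : ∀ a ∈ t₂, x ∈ cone C a u) :
    t₁.getD x = t₂.getD x ↔ t₁.getD u = t₂.getD u := by
  obtain ⟨swap, asymm, -, -⟩ := hC
  rcases t₁ with _ | a₁ <;> rcases t₂ with _ | a₂ <;>
    simp only [Option.getD, Option.mem_def, reduceCtorEq, Option.some.injEq, forall_eq',
      cone, mem_ofPred_eq] at * <;> grind

theorem isTopologicalBasis_generateFrom_cones [Nontrivial M] (hC : IsCRelation C) :
    @IsTopologicalBasis M (generateFrom {V | IsCone C V}) {V | IsCone C V} := by
  let := generateFrom {V | IsCone C V}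
  refine ⟨?_, ?_, rfl⟩
  · rintro V hV W hW x ⟨hxV, hxW⟩
    obtain ⟨s, hs, rfl⟩ := hC.exists_eq_cone hV hxV
    obtain ⟨t, ht, rfl⟩ := hC.exists_eq_cone hW hxW
    obtain ⟨p, hp, hsub⟩ := hC.exists_cone_subset_inter hs ht
    exact ⟨cone C p x, ⟨p, x, hp, rfl⟩, hC.self_mem_cone hp, hsub⟩
  · refine eq_univ_of_forall fun x => ?_
    obtain ⟨a, ha⟩ := exists_ne x
    exact mem_sUnion.2 ⟨cone C a x, ⟨a, x, ha, rfl⟩, hC.self_mem_cone ha⟩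

end IsCRelation

theorem notMem_frontier_of_eventually_iff {X : Type*} [TopologicalSpace X] {P : Set X} {u : X}
    (h : ∀ᶠ x in 𝓝 u, (x ∈ P ↔ u ∈ P)) : u ∉ frontier P := by
  by_cases hu : u ∈ P
  · exact fun hf => hf.2 (mem_interior_iff_mem_nhds.2 (h.mono fun x hx => hx.2 hu))
  · exact fun hf => mem_closure_iff_frequently.1 hf.1 (h.mono fun x hx hxP => hu (hx.1 hxP))

namespace IsCRelation

section Basis

variable {C : M → M → M → Prop} {a b u : M} {P : Set M} [TopologicalSpace M]

theorem nhds_hasBasis_cone (hC : IsCRelation C) (hB : IsTopologicalBasis {V | IsCone C V}) (u : M) :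
    (𝓝 u).HasBasis (· ≠ u) (cone C · u) := by
  refine hB.nhds_hasBasis.to_hasBasis ?_ fun s hs =>
    ⟨cone C s u, ⟨⟨s, u, hs, rfl⟩, hC.self_mem_cone hs⟩, Subset.rfl⟩
  rintro V ⟨hV, hu⟩
  obtain ⟨s, hs, rfl⟩ := hC.exists_eq_cone hV hu
  exact ⟨s, hs, Subset.rfl⟩

theorem mem_interior_iff (hC : IsCRelation C) (hB : IsTopologicalBasis {V | IsCone C V}) :
    u ∈ interior P ↔ ∃ s ≠ u, cone C s u ⊆ P := by
  rw [mem_interior_iff_mem_nhds, (hC.nhds_hasBasis_cone hB u).mem_iff]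

theorem t1Space (hC : IsCRelation C) (hB : IsTopologicalBasis {V | IsCone C V}) : T1Space M :=
  t1Space_iff_exists_open.2 fun u x hux => ⟨cone C x u, hB.isOpen ⟨x, u, hux.symm, rfl⟩,
    hC.self_mem_cone hux.symm, hC.left_notMem_cone⟩

theorem neBot_nhdsNE (hC : IsCRelation C) (hB : IsTopologicalBasis {V | IsCone C V}) (u : M) :
    (𝓝[≠] u).NeBot :=
  (nhdsWithin_hasBasis (hC.nhds_hasBasis_cone hB u) _).neBot_iff.2 hC.exists_mem_cone_ne

theorem eventually_forall_mem_cone (hC : IsCRelation C)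
    (hB : IsTopologicalBasis {V | IsCone C V}) {t : Option M} (hu : u ∉ t) :
    ∀ᶠ x in 𝓝 u, ∀ a ∈ t, x ∈ cone C a u := by
  cases t with
  | none => simp
  | some a => simpa using (hC.nhds_hasBasis_cone hB u).mem_of_mem (by simpa using hu)

theorem finite_frontier (hC : IsCRelation C) (hB : IsTopologicalBasis {V | IsCone C V})
    (hP : QFDef C P) : (frontier P).Finite := by
  have finite_params (t : Option M) : {a | a ∈ t}.Finite :=
    Set.Subsingleton.finite fun _ ha _ hb => Option.mem_unique ha hb
  induction hP with
  | atomC t₁ t₂ t₃ =>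
    refine ((finite_params t₁).union ((finite_params t₂).union (finite_params t₃))).subset
      fun u => not_imp_not.1 fun hu => notMem_frontier_of_eventually_iff ?_
    simp only [mem_union, mem_ofPred_eq, not_or] at hu
    filter_upwards [hC.eventually_forall_mem_cone hB hu.1, hC.eventually_forall_mem_cone hB hu.2.1,
      hC.eventually_forall_mem_cone hB hu.2.2] with x h₁ h₂ h₃ using hC.getD_congr h₁ h₂ h₃
  | atomEq t₁ t₂ =>
    refine ((finite_params t₁).union (finite_params t₂)).subset
      fun u => not_imp_not.1 fun hu => notMem_frontier_of_eventually_iff ?_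
    simp only [mem_union, mem_ofPred_eq, not_or] at hu
    filter_upwards [hC.eventually_forall_mem_cone hB hu.1,
      hC.eventually_forall_mem_cone hB hu.2] with x h₁ h₂ using hC.getD_eq_congr h₁ h₂
  | compl _ ih => rwa [frontier_compl]
  | @union S T _ _ ihS ihT =>
    exact ((ihS.inter_of_left _).union (ihT.inter_of_right _)).subset (frontier_union_subset S T)

end Basis

theorem infinite_cone {C : M → M → M → Prop} (hC : IsCRelation C) {a b : M} (hab : a ≠ b) :
    (cone C a b).Infinite := by
  have : Nontrivial M := ⟨a, b, hab⟩
  let := generateFrom {V | IsCone C V}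
  have hB := hC.isTopologicalBasis_generateFrom_cones
  have := hC.t1Space hB
  have := hC.neBot_nhdsNE hB b
  exact infinite_of_mem_nhds b ((hC.nhds_hasBasis_cone hB b).mem_of_mem hab)

end IsCRelation

section Definability

theorem definable_forall_snoc {L : FirstOrder.Language} [L.Structure M] {B : Set M} {n : ℕ}
    {R : (Fin n → M) → M → Prop}
    (hR : B.Definable L {w : Fin (n + 1) → M | R (Fin.init w) (w (Fin.last n))}) :
    B.Definable L {v | ∀ x, R v x} := by
  convert! (hR.compl.image_comp_embedding Fin.castSuccEmb).compl using 1
  ext v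
  simp only [mem_ofPred_eq, mem_compl_iff, mem_image, not_exists, not_and, not_imp_not]
  refine ⟨?_, fun h x => ?_⟩
  · rintro h w rfl
    exact h (w (Fin.last n))
  · simpa using h (Fin.snoc v x) (Fin.init_snoc (α := fun _ => M) x v)

variable {L : FirstOrder.Language.{u, u}} [L.Structure M] {B P : Set M} {b y : M}
  {Φ : Set (Fin 2 → M)}

theorem mem_acl_of_mem (hb : b ∈ B) : b ∈ acl L M B :=
  ⟨{b}, Set.Definable.singleton_of_mem L hb, finite_singleton b, rfl⟩

theorem definable_interpC (r : L.Relations 3) {α : Type*} (i j k : α) :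
    B.Definable L {w : α → M | interpC L M r (w i) (w j) (w k)} := by
  refine (empty_definable_iff.2 ⟨r.formula ![.var i, .var j, .var k], ?_⟩).mono (empty_subset B)
  ext w
  simp only [mem_ofPred_eq, interpC, FirstOrder.Language.Formula.realize_rel]
  refine iff_of_eq (congrArg _ (funext fun l => ?_))
  fin_cases l <;> rfl

theorem definable_exists_cone_subset (r : L.Relations 3) (hP : B.Definable₁ L P) :
    B.Definable₁ L {u | ∃ s ≠ u, cone (interpC L M r) s u ⊆ P} := by
  have hne : B.Definable L {w : Fin 2 → M | w 1 ≠ w 0} :=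
    ((Set.Definable.diagonal L B).preimage_comp (![1, 0] : Fin 2 → Fin 2)).compl
  have hsub : B.Definable L {w : Fin 2 → M | cone (interpC L M r) (w 1) (w 0) ⊆ P} :=
    definable_forall_snoc <| (definable_interpC r (1 : Fin 3) 2 0).himp <|
      hP.preimage_comp fun _ => 2
  have hnot : B.Definable L {v : Fin 1 → M | ∀ s, s ≠ v 0 → ¬ cone (interpC L M r) s (v 0) ⊆ P} :=
    definable_forall_snoc <| hne.himp hsub.compl
  unfold Set.Definable₁
  convert! hnot.compl using 1
  ext v
  simp

theorem definable_node_subset_fiber (r : L.Relations 3) (hΦ : B.Definable L Φ) (hy : y ∈ B) :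
    B.Definable₁ L {u | ∀ x ∈ node (interpC L M r) u y, ![u, x] ∈ Φ} := by
  have hfiber : B.Definable L {w : Fin 3 → M | ![w 0, w 2] ∈ Φ} := by
    have hcomp (w : Fin 3 → M) : w ∘ ![0, 2] = ![w 0, w 2] := (FinVec.map_eq w ![0, 2]).symm
    simpa only [preimage, hcomp] using hΦ.preimage_comp (![0, 2] : Fin 2 → Fin 3)
  have hsub : B.Definable L
      {w : Fin 2 → M | ∀ x, x ∈ node (interpC L M r) (w 0) (w 1) → ![w 0, x] ∈ Φ} :=
    definable_forall_snoc <| (definable_interpC r (2 : Fin 3) 0 1).compl.himp hfiber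
  have hall : B.Definable L {v : Fin 1 → M | ∀ z, z = y →
      ∀ x, x ∈ node (interpC L M r) (v 0) z → ![v 0, x] ∈ Φ} :=
    definable_forall_snoc <|
      ((Set.Definable.singleton_of_mem L hy).preimage_comp fun _ => (1 : Fin 2)).himp hsub
  simpa only [Set.Definable₁, forall_eq, mem_ofPred_eq] using hall

theorem nontrivial_of_notMem_acl (hb : b ∉ acl L M B) : Nontrivial M := by
  by_contra h
  rw [not_nontrivial_iff_subsingleton] at h
  exact hb ⟨univ, definable_univ, toFinite _, mem_univ b⟩

theorem exists_cone_subset_of_notMem_acl (r : L.Relations 3) (hC : IsCRelation (interpC L M r))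
    (hqf : QFDef (interpC L M r) P) (hP : B.Definable₁ L P) (hbP : b ∈ P) (hb : b ∉ acl L M B) :
    ∃ s ≠ b, cone (interpC L M r) s b ⊆ P := by
  have := nontrivial_of_notMem_acl hb
  let := generateFrom {V | IsCone (interpC L M r) V}
  have hB := hC.isTopologicalBasis_generateFrom_cones
  have hinterior : B.Definable₁ L (interior P) := by
    simpa only [← hC.mem_interior_iff hB, ofPred_mem_eq] using definable_exists_cone_subset r hP
  rw [← hC.mem_interior_iff hB]
  by_contra hbI
  exact hb ⟨P \ interior P, hP.sdiff hinterior,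
    (hC.finite_frontier hB hqf).subset (sdiff_subset_sdiff_left subset_closure), hbP, hbI⟩

theorem exists_cone_square_subset_of_notMem_acl (r : L.Relations 3)
    (hC : IsCRelation (interpC L M r))
    (hqf : ∀ s : Set M, Set.Definable₁ univ L s → QFDef (interpC L M r) s)
    (hΦ : B.Definable L Φ) (hb : b ∉ acl L M (B ∪ {y}))
    (h : ∀ v ∈ node (interpC L M r) b y, ![b, v] ∈ Φ) :
    ∃ t ≠ b, ∀ u ∈ cone (interpC L M r) t b, ∀ v ∈ cone (interpC L M r) t b, ![u, v] ∈ Φ := by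
  have hF := definable_node_subset_fiber r (hΦ.mono subset_union_left)
    (mem_union_right B (mem_singleton y))
  obtain ⟨s, hsb, hs⟩ := exists_cone_subset_of_notMem_acl r hC
    (hqf _ (hF.mono (subset_univ _))) hF h hb
  have hyb : y ≠ b := fun hyb => hb (mem_acl_of_mem (mem_union_right B hyb.symm))
  obtain ⟨t, htb, ht⟩ := hC.exists_cone_subset_inter hsb hyb
  exact ⟨t, htb, fun u hu v hv => hs (ht hu).1 v (hC.cone_subset_node (ht hu).2 (ht hv).2)⟩

end Definability
/-- The ultrapower of `M` along the ultrafilter `U`; as an `abbrev`, it inherits the first-order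
structure of a filter product. -/
abbrev Ultrapower {I : Type*} (M : Type*) (U : Ultrafilter I) : Type _ :=
  (U : Filter I).Product fun _ => M

namespace Ultrapower

section General

variable {I α : Type*} {U : Ultrafilter I} {S : Set (α → M)} {L : FirstOrder.Language}
  [L.Structure M] {A : Set M}

variable (U) in
/-- The class of a family in the ultrapower. -/
def mk (x : I → M) : Ultrapower M U := Quotient.mk _ x

variable (U) in
/-- The diagonal embedding of `M` in its ultrapower. -/
def diag (m : M) : Ultrapower M U := mk U fun _ => m

variable (U) in
/-- The nonstandard extension of a set of tuples, made of the tuples which have a representative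
lying in the set almost everywhere. For finite tuples it does not depend on the representative, see
`mem_extension`. -/
def extension (S : Set (α → M)) : Set (α → Ultrapower M U) :=
  {x | ∃ f : α → I → M, (fun j => mk U (f j)) = x ∧ ∀ᶠ i in U, (fun j => f j i) ∈ S}

theorem exists_mk (x : Ultrapower M U) : ∃ f : I → M, mk U f = x := Quotient.exists_rep x

theorem mk_eq_mk {f g : I → M} : mk U f = mk U g ↔ ∀ᶠ i in U, f i = g i := Quotient.eq

theorem diag_injective : Function.Injective (diag U : M → Ultrapower M U) := fun _ _ h =>
  eventually_const.1 (mk_eq_mk.1 h)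

theorem mem_extension [Finite α] {f : α → I → M} :
    (fun j => mk U (f j)) ∈ extension U S ↔ ∀ᶠ i in U, (fun j => f j i) ∈ S := by
  refine ⟨?_, fun h => ⟨f, rfl, h⟩⟩
  rintro ⟨g, hgf, hg⟩
  filter_upwards [hg, eventually_all.2 fun j => mk_eq_mk.1 (congrFun hgf j)] with i hi hgf
  simpa only [hgf] using hi

theorem pair_mem_extension {S : Set (Fin 2 → M)} {f g : I → M} :
    ![mk U f, mk U g] ∈ extension U S ↔ ∀ᶠ i in U, ![f i, g i] ∈ S := by
  have map_mk : (fun j => mk U (![f, g] j)) = ![mk U f, mk U g] :=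
    (FinVec.map_eq (mk U) ![f, g]).symm
  have map_apply (i : I) : (fun j => ![f, g] j i) = ![f i, g i] :=
    (FinVec.map_eq (fun h : I → M => h i) ![f, g]).symm
  simpa only [map_mk, map_apply] using mem_extension (U := U) (S := S) (f := ![f, g])

theorem elementarilyEquivalent [Nonempty M] : L.ElementarilyEquivalent M (Ultrapower M U) :=
  Language.elementarilyEquivalent_iff.2 fun φ => by
    rw [Language.Ultraproduct.sentence_realize, eventually_const]

theorem realize_mk [Nonempty M] (φ : L.Formula (A ⊕ α)) (f : α → I → M) :
    φ.Realize (Sum.elim (fun a => diag U (a : M)) fun j => mk U (f j)) ↔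
      ∀ᶠ i in U, φ.Realize (Sum.elim (fun a => (a : M)) fun j => f j i) := by
  have elim_mk : (Sum.elim (fun a : A => diag U (a : M)) fun j => mk U (f j)) =
      fun k => mk U (Sum.elim (fun (a : A) _ => (a : M)) f k) := by
    ext (a | j) <;> rfl
  have elim_apply (i : I) : (Sum.elim (fun a : A => (a : M)) fun j => f j i) =
      fun k => Sum.elim (fun (a : A) _ => (a : M)) f k i := by
    ext (a | j) <;> rfl
  simp only [elim_mk, elim_apply]
  exact Language.Ultraproduct.realize_formula_cast φ _

theorem extension_realize [Nonempty M] (φ : L.Formula (A ⊕ α)) :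
    extension U {v | φ.Realize (Sum.elim (fun a => (a : M)) v)} =
      {v | φ.Realize (Sum.elim (fun a => diag U (a : M)) v)} := by
  ext v
  constructor
  · rintro ⟨f, rfl, hf⟩
    exact (realize_mk φ f).2 hf
  · intro hv
    choose f hf using fun j => exists_mk (v j)
    obtain rfl : (fun j => mk U (f j)) = v := funext hf
    exact ⟨f, rfl, (realize_mk φ f).1 hv⟩

theorem definable_image_diag_iff [Nonempty M] {T : Set (α → Ultrapower M U)} :
    (diag U '' A).Definable L T ↔ ∃ S, A.Definable L S ∧ extension U S = T := by
  let e : A ≃ diag U '' A := Equiv.Set.image (diag U) A diag_injective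
  have extension_eq (φ : L.Formula (A ⊕ α)) :
      extension U {v | φ.Realize (Sum.elim (fun a => (a : M)) v)} =
        {v | (φ.relabel (Sum.map e id)).Realize (Sum.elim (fun a => (a : Ultrapower M U)) v)} := by
    simp only [extension_realize, Language.Formula.realize_relabel, Sum.elim_comp_map]
    rfl
  simp only [definable_iff_exists_formula_sum]
  constructor
  · rintro ⟨φ, rfl⟩
    refine ⟨_, ⟨φ.relabel (Sum.map e.symm id), rfl⟩, ?_⟩
    rw [extension_eq]
    simp [Language.Formula.realize_relabel, Sum.elim_comp_map, Function.comp_assoc]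
  · rintro ⟨_, ⟨φ, rfl⟩, rfl⟩
    exact ⟨_, extension_eq φ⟩

theorem relMap_mk {n : ℕ} {R : L.Relations n} {f : Fin n → I → M} :
    Language.Structure.RelMap R (fun j => mk U (f j)) ↔
      ∀ᶠ i in U, Language.Structure.RelMap R fun j => f j i :=
  Language.relMap_quotient_mk' _ R f

end General

variable {I : Type u} {U : Ultrafilter I} {L : FirstOrder.Language.{u, u}} [L.Structure M]
  {A : Set M} {r : L.Relations 3} {b : M}

theorem exists_finite_of_mem_acl [Nonempty M] {y : I → M}
    (hy : mk U y ∈ acl L (Ultrapower M U) (diag U '' A)) :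
    ∃ S : Set M, A.Definable₁ L S ∧ S.Finite ∧ ∀ᶠ i in U, y i ∈ S := by
  obtain ⟨T, hT, hfin, hyT⟩ := hy
  obtain ⟨S, hS, hST⟩ := definable_image_diag_iff.1 hT
  have mem_iff (z : I → M) : mk U z ∈ T ↔ ∀ᶠ i in U, (fun _ => z i) ∈ S := by
    rw [← mem_extension (f := fun _ => z), hST]
    rfl
  refine ⟨{m | (fun _ => m) ∈ S}, ?_, ?_, (mem_iff y).1 hyT⟩
  · have eta (x : Fin 1 → M) : (fun _ => x 0) = x := funext fun j => by rw [Subsingleton.elim j 0]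
    simpa only [Set.Definable₁, mem_ofPred_eq, eta, ofPred_mem_eq] using hS
  · refine (hfin.preimage diag_injective.injOn).subset fun m hm => ?_
    exact (mem_iff _).2 (.of_forall fun _ => hm)

theorem mem_acl_of_diag_mem_acl (hb : diag U b ∈ acl L (Ultrapower M U) (diag U '' A)) :
    b ∈ acl L M A :=
  have : Nonempty M := ⟨b⟩
  have ⟨S, hS, hfin, hbS⟩ := exists_finite_of_mem_acl hb
  ⟨S, hS, hfin, eventually_const.1 hbS⟩

theorem mk_val_notMem_acl {X : Set M} [Infinite X] :
    mk (hyperfilter X) Subtype.val ∉ acl L (Ultrapower M (hyperfilter X))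
      (diag (hyperfilter X) '' A) := by
  intro h
  have : Nonempty M := ‹Infinite X›.nonempty.map Subtype.val
  obtain ⟨S, -, hfin, hS⟩ := exists_finite_of_mem_acl h
  exact notMem_hyperfilter_of_finite (hfin.preimage Subtype.val_injective.injOn) hS

theorem diag_notMem_acl_of_hasExchange {X : Set M} [Infinite X]
    (hex : HasExchange L (Ultrapower M (hyperfilter X))) (hb : b ∉ acl L M A) :
    diag (hyperfilter X) b ∉ acl L (Ultrapower M (hyperfilter X))
      (diag (hyperfilter X) '' A ∪ {mk (hyperfilter X) Subtype.val}) := by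
  intro h
  have hval := hex _ _ _ h (mt mem_acl_of_diag_mem_acl hb)
  rw [← image_singleton, ← image_union] at hval
  exact mk_val_notMem_acl hval

theorem interpC_mk {x y z : I → M} :
    interpC L (Ultrapower M U) r (mk U x) (mk U y) (mk U z) ↔
      ∀ᶠ i in U, interpC L M r (x i) (y i) (z i) := by
  have map_mk : (fun j => mk U (![x, y, z] j)) = ![mk U x, mk U y, mk U z] :=
    (FinVec.map_eq (mk U) ![x, y, z]).symm
  have map_apply (i : I) : (fun j => ![x, y, z] j i) = ![x i, y i, z i] :=
    (FinVec.map_eq (fun h : I → M => h i) ![x, y, z]).symm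
  simpa only [interpC, map_mk, map_apply] using relMap_mk (U := U) (R := r) (f := ![x, y, z])

theorem isCRelation (hC : IsCRelation (interpC L M r)) :
    IsCRelation (interpC L (Ultrapower M U) r) := by
  obtain ⟨swap, asymm, branch, dense⟩ := hC
  refine ⟨fun x y z => ?_, fun x y z => ?_, fun x y z w => ?_, fun x y hxy => ?_⟩ <;>
    obtain ⟨x, rfl⟩ := exists_mk x <;> obtain ⟨y, rfl⟩ := exists_mk y
  · obtain ⟨z, rfl⟩ := exists_mk z
    simp only [interpC_mk]
    exact fun h => h.mono fun i => swap _ _ _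
  · obtain ⟨z, rfl⟩ := exists_mk z
    simp only [interpC_mk, ← Ultrafilter.eventually_not]
    exact fun h => h.mono fun i => asymm _ _ _
  · obtain ⟨z, rfl⟩ := exists_mk z
    obtain ⟨w, rfl⟩ := exists_mk w
    simp only [interpC_mk, ← Ultrafilter.eventually_or]
    exact fun h => h.mono fun i => branch _ _ _ _
  · rw [Ne, mk_eq_mk, ← Ultrafilter.eventually_not] at hxy
    obtain ⟨z, hz⟩ := (hxy.mono fun i => dense _ _).choice
    refine ⟨mk U z, ?_, interpC_mk.2 (hz.mono fun i hi => hi.2)⟩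
    rw [Ne, mk_eq_mk, ← Ultrafilter.eventually_not]
    exact hz.mono fun i hi => hi.1

theorem pair_mem_extension_of_mem_node {Φ : Set (Fin 2 → M)} {a c : M} {y : I → M}
    (hC : IsCRelation (interpC L M r)) (hb : b ∈ cone (interpC L M r) a c)
    (hy : ∀ᶠ i in U, y i ∈ cone (interpC L M r) a c)
    (h : ∀ v ∈ cone (interpC L M r) a c, ![b, v] ∈ Φ) :
    ∀ x ∈ node (interpC L (Ultrapower M U) r) (diag U b) (mk U y),
      ![diag U b, x] ∈ extension U Φ := by
  intro x hx
  obtain ⟨x, rfl⟩ := exists_mk x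
  have hnode := Ultrafilter.eventually_not.2 (mt interpC_mk.2 hx)
  refine pair_mem_extension.2 ?_
  filter_upwards [hnode, hy] with i hi hyi using h _ (hC.node_subset_cone hb hyi hi)

theorem exists_cone_square_subset_of_extension {Φ : Set (Fin 2 → M)}
    (h : ∃ t ≠ diag U b, ∀ u ∈ cone (interpC L (Ultrapower M U) r) t (diag U b),
      ∀ v ∈ cone (interpC L (Ultrapower M U) r) t (diag U b), ![u, v] ∈ extension U Φ) :
    ∃ t ≠ b, ∀ u ∈ cone (interpC L M r) t b, ∀ v ∈ cone (interpC L M r) t b, ![u, v] ∈ Φ := by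
  obtain ⟨t, htb, ht⟩ := h
  obtain ⟨t, rfl⟩ := exists_mk t
  rw [diag, Ne, mk_eq_mk, ← Ultrafilter.eventually_not] at htb
  by_contra! hcon
  obtain ⟨f, hf⟩ := (htb.mono fun i hi => hcon _ hi).choice
  obtain ⟨g, hg⟩ := (hf.mono fun i hi => hi.2).choice
  obtain ⟨i, hiΦ, hi⟩ := ((pair_mem_extension.1 (ht (mk U f)
    (interpC_mk.2 (hf.mono fun i hi => hi.1)) (mk U g)
    (interpC_mk.2 (hg.mono fun i hi => hi.1)))).and hg).exists
  exact hi.2 hiΦ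

end Ultrapower

theorem statement4_general {L : FirstOrder.Language.{u, u}} {M : Type u} [L.Structure M]
    (r : L.Relations 3)
    (hC : IsCRelation (interpC L M r))
    (hmin : CMinimal L M r)
    (hgeom : Geometric L M)
    {A : Set M} {Φ : Set (Fin 2 → M)} (hΦ : Set.Definable A L Φ)
    {b : M} (hb : b ∉ acl L M A)
    {V : Set M} (hV : IsCone (interpC L M r) V) (hbV : b ∈ V) (h : ∀ v ∈ V, ![b, v] ∈ Φ) :
    ∃ D' : Set M, IsCone (interpC L M r) D' ∧ b ∈ D' ∧
      ∀ u ∈ D', ∀ v ∈ D', ![u, v] ∈ Φ := by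
  have : Nonempty M := ⟨b⟩
  obtain ⟨p, hpb, rfl⟩ := hC.exists_eq_cone hV hbV
  let X := cone (interpC L M r) p b
  have : Infinite X := (hC.infinite_cone hpb).to_subtype
  have hequiv : L.ElementarilyEquivalent M (Ultrapower M (hyperfilter X)) :=
    Ultrapower.elementarilyEquivalent
  have hnode := Ultrapower.pair_mem_extension_of_mem_node (U := hyperfilter X)
    (y := Subtype.val) hC hbV (.of_forall Subtype.prop) h
  obtain ⟨t, htb, ht⟩ := Ultrapower.exists_cone_square_subset_of_extension <|
    exists_cone_square_subset_of_notMem_acl r (Ultrapower.isCRelation hC) (hmin _ _ hequiv)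
      (Ultrapower.definable_image_diag_iff.2 ⟨Φ, hΦ, rfl⟩)
      (Ultrapower.diag_notMem_acl_of_hasExchange (hgeom _ _ hequiv) hb) hnode
  exact ⟨cone (interpC L M r) t b, ⟨t, b, htb, rfl⟩, hC.self_mem_cone htb, ht⟩

theorem statement4 {L : FirstOrder.Language.{u, u}} {M : Type u} [L.Structure M]
    (r : L.Relations 3)
    (hC : IsCRelation (interpC L M r))
    (hmin : CMinimal L M r)
    (hgeom : Geometric L M)
    (A : Set M) (hA : A.Finite)
    (Φ : Set (Fin 2 → M)) (hΦ : Set.Definable A L Φ)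
    (b : M) (hb : b ∉ acl L M A)
    (D : Set M) (hD : IsCone (interpC L M r) D) (hbD : b ∈ D)
    (h : ∀ u ∈ D, ∃ Vu : Set M, IsCone (interpC L M r) Vu ∧ Vu ⊆ D ∧ u ∈ Vu ∧
      ∀ v ∈ Vu, ![u, v] ∈ Φ) :
    ∃ D' : Set M, IsCone (interpC L M r) D' ∧ b ∈ D' ∧
      ∀ u ∈ D', ∀ v ∈ D', ![u, v] ∈ Φ := by
  obtain ⟨V, hV, -, hbV, h⟩ := h b hbD
  exact statement4_general r hC hmin hgeom hΦ hb hV hbV h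

end CMinPaper
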